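/- (Theorem 1, optimality of IxG*, invariant form.) Let (V, E, w) be a finite weighted directed graph with nonnegative weights, let s, t be vertices such that some walk from s to t exists, and let h : V → ℝ be admissible for target t. Let g : V → ℝ be such that (i) g(t) equals the cost of some walk from s to t, and (ii) for every walk W from s to t there exists an occurrence of a vertex v on W such that g(v) is at most the cost of the prefix of W up to v and g(t) ≤ g(v) + h(v). Then g(t) equals d(s,t), the infimum of the costs of walks from s to t. -/

import Mathlib

/-- A walk from `s` to `t` in the directed graph with adjacency `E`:
a nonempty list of vertices starting at `s`, ending at `t`, with
consecutive vertices adjacent. -/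
def IsWalk {V : Type*} (E : V → V → Prop) (s t : V) (l : List V) : Prop :=
  l ≠ [] ∧ l.head? = some s ∧ l.getLast? = some t ∧ l.Chain' E

/-- Cost of a walk: the sum of the weights of its consecutive pairs. -/
def walkCost {V : Type*} (w : V → V → ℝ) (l : List V) : ℝ :=
  ((l.zip l.tail).map fun p => w p.1 p.2).sum

/-!
Cut a walk from `s` to `t` at the occurrence of `v` supplied by the termination condition. The
prefix costs at least `g v`, and the suffix, being a walk from `v` to `t`, costs at least `h v`, so
the whole walk costs at least `g v + h v ≥ g t`. As `g t` is itself the cost of a walk, the infimum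
is attained there.
-/

section

variable {V : Type*} {E : V → V → Prop} {w : V → V → ℝ} {s t v : V} {l₁ l₂ : List V}

theorem walkCost_singleton (w : V → V → ℝ) (v : V) : walkCost w [v] = 0 := by
  simp [walkCost]

theorem walkCost_cons_cons (w : V → V → ℝ) (u v : V) (l : List V) :
    walkCost w (u :: v :: l) = w u v + walkCost w (v :: l) := by
  simp [walkCost]

theorem walkCost_append_cons (w : V → V → ℝ) (l₁ : List V) (v : V) (l₂ : List V) :
    walkCost w (l₁ ++ v :: l₂) = walkCost w (l₁ ++ [v]) + walkCost w (v :: l₂) := by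
  induction l₁ with
  | nil => simp [walkCost_singleton]
  | cons a l ih =>
    cases l with
    | nil => simp [walkCost_cons_cons, walkCost_singleton]
    | cons b l =>
      simp only [List.cons_append, walkCost_cons_cons] at ih ⊢
      rw [ih, add_assoc]

namespace IsWalk

theorem of_append_cons (hl : IsWalk E s t (l₁ ++ v :: l₂)) : IsWalk E v t (v :: l₂) := by
  obtain ⟨-, -, hlast, hchain⟩ := hl
  refine ⟨List.cons_ne_nil v l₂, List.head?_cons, ?_, hchain.right_of_append⟩
  rwa [List.getLast?_append_of_ne_nil l₁ (List.cons_ne_nil v l₂)] at hlast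

theorem add_le_walkCost {a b : ℝ} (hl : IsWalk E s t (l₁ ++ v :: l₂))
    (hprefix : a ≤ walkCost w (l₁ ++ [v])) (hsuffix : ∀ l, IsWalk E v t l → b ≤ walkCost w l) :
    a + b ≤ walkCost w (l₁ ++ v :: l₂) := by
  rw [walkCost_append_cons]
  exact add_le_add hprefix (hsuffix _ hl.of_append_cons)

end IsWalk

theorem ixg_star_optimal_general (h : V → ℝ)
    (hadm : ∀ v l, IsWalk E v t l → h v ≤ walkCost w l) (g : V → ℝ)
    (hgoal : ∃ l, IsWalk E s t l ∧ g t = walkCost w l)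
    (hinv : ∀ l, IsWalk E s t l → ∃ l₁ v l₂, l = l₁ ++ v :: l₂ ∧
      g v ≤ walkCost w (l₁ ++ [v]) ∧ g t ≤ g v + h v) :
    IsLeast {c | ∃ l, IsWalk E s t l ∧ walkCost w l = c} (g t) := by
  obtain ⟨l, hl, hgl⟩ := hgoal
  refine ⟨⟨l, hl, hgl.symm⟩, ?_⟩
  rintro _ ⟨l', hl', rfl⟩
  obtain ⟨l₁, v, l₂, rfl, hprefix, hkey⟩ := hinv l' hl'
  calc
    g t ≤ g v + h v := hkey
    _ ≤ walkCost w (l₁ ++ v :: l₂) := hl'.add_le_walkCost hprefix (hadm v)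

end

/-- Theorem 1, optimality of IxG*, invariant form. -/
theorem ixg_star_optimal
    {V : Type*} [Fintype V] (E : V → V → Prop) (w : V → V → ℝ)
    (hw : ∀ a b, E a b → 0 ≤ w a b) (s t : V)
    (hex : ∃ l, IsWalk E s t l)
    (h : V → ℝ) (hadm : ∀ v l, IsWalk E v t l → h v ≤ walkCost w l)
    (g : V → ℝ)
    (hgoal : ∃ l, IsWalk E s t l ∧ g t = walkCost w l)
    (hinv : ∀ l, IsWalk E s t l → ∃ l₁ v l₂, l = l₁ ++ v :: l₂ ∧
      g v ≤ walkCost w (l₁ ++ [v]) ∧ g t ≤ g v + h v) :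
    g t = sInf {c | ∃ l, IsWalk E s t l ∧ walkCost w l = c} := by
  exact (ixg_star_optimal_general h hadm g hgoal hinv).csInf_eq.symm
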